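/- Let (X, μ) be a finite measure space. Let b_{1,n}, b_1 be integrable functions such that {b_{1,n}} converges to b_1 weakly in L^1(μ), i.e. ∫_X b_{1,n} φ dμ → ∫_X b_1 φ dμ for every bounded measurable φ : X → ℝ. Let {b_{2,n}} be a sequence of measurable functions and C > 0 a constant with |b_{2,n}| ≤ C μ-a.e. for every n, such that b_{2,n} → b_2 μ-a.e. Then ∫_X b_{1,n} b_{2,n} dμ → ∫_X b_1 b_2 dμ. -/

import Mathlib

open MeasureTheory Filter Topology

lemma aux_integrable_mul {X : Type*} [MeasurableSpace X] {μ : Measure X}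
    {f φ : X → ℝ} {M : ℝ} (hf : Integrable f μ) (hφ : AEStronglyMeasurable φ μ)
    (hb : ∀ᵐ x ∂μ, |φ x| ≤ M) : Integrable (fun x => f x * φ x) μ :=
  hf.mul_bdd hφ (c := M) (by simpa [Real.norm_eq_abs] using hb)

/-- Continuity of `φ ↦ ∫ f φ` on the unit ball of `L^∞` with the `L¹` topology. -/
lemma aux_cont {X : Type*} [MeasurableSpace X] {μ : Measure X}
    {f : X → ℝ} (hf : Integrable f μ) (K : Set (Lp ℝ 1 μ))
    (hK : ∀ φ ∈ K, ∀ᵐ x ∂μ, |φ x| ≤ 1) :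
    Continuous (fun φ : K => ∫ x, f x * (φ : Lp ℝ 1 μ) x ∂μ) := by
  rw [continuous_iff_seqContinuous]
  intro u p hu
  apply tendsto_of_subseq_tendsto
  intro ns hns
  have h1 : Tendsto (fun k => ((u (ns k) : K) : Lp ℝ 1 μ)) atTop (𝓝 (p : Lp ℝ 1 μ)) :=
    (continuous_subtype_val.tendsto p).comp (hu.comp hns)
  have h2 := tendstoInMeasure_of_tendsto_Lp h1
  obtain ⟨ms, hms, hae⟩ := h2.exists_seq_tendsto_ae
  refine ⟨ms, ?_⟩
  apply tendsto_integral_of_dominated_convergence (fun x => |f x|)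
  · intro n
    exact hf.1.mul (Lp.aestronglyMeasurable _)
  · exact hf.abs
  · intro n
    filter_upwards [hK _ (u (ns (ms n))).2] with x hx
    rw [norm_mul, Real.norm_eq_abs, Real.norm_eq_abs]
    exact mul_le_of_le_one_right (abs_nonneg _) hx
  · filter_upwards [hae] with x hx
    exact hx.const_mul _

lemma aux_clamp (a g : ℝ) (ha : |a| ≤ 1) (hg : |g| ≤ 1) :
    |max (-1) (min 1 (a + g))| ≤ 1 ∧ |max (-1) (min 1 (a + g)) - g| ≤ 1 ∧
    |max (-1) (min 1 (a + g)) - a| ≤ |g| ∧ |max (-1) (min 1 (a + g)) - g - a| ≤ |g| := by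
  grind

lemma aux_main {X : Type*} [MeasurableSpace X] (μ : Measure X) [IsFiniteMeasure μ]
    (f : ℕ → X → ℝ) (g : ℕ → X → ℝ) (hf : ∀ n, Integrable (f n) μ)
    (hw : ∀ φ : X → ℝ, Measurable φ → (∃ M : ℝ, ∀ x, |φ x| ≤ M) →
      Tendsto (fun n => ∫ x, f n x * φ x ∂μ) atTop (𝓝 0))
    (hgm : ∀ n, AEStronglyMeasurable (g n) μ) (hgb : ∀ n, ∀ᵐ x ∂μ, |g n x| ≤ 1)
    (hg : ∀ᵐ x ∂μ, Tendsto (fun n => g n x) atTop (𝓝 0)) :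
    Tendsto (fun n => ∫ x, f n x * g n x ∂μ) atTop (𝓝 0) := by
  obtain ⟨c, hc⟩ : ∃ c : Lp ℝ 1 μ, ∀ᵐ x ∂μ, c x = 1 :=
    ⟨(memLp_const (1 : ℝ)).toLp _, (memLp_const (1 : ℝ)).coeFn_toLp⟩
  set K : Set (Lp ℝ 1 μ) := Set.Icc (-c) c with hKdef
  have hKmem : ∀ φ : Lp ℝ 1 μ, φ ∈ K ↔ ∀ᵐ x ∂μ, |φ x| ≤ 1 := by
    intro φ
    rw [hKdef, Set.mem_Icc, ← Lp.coeFn_le, ← Lp.coeFn_le]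
    constructor
    · rintro ⟨h1, h2⟩
      filter_upwards [h1, h2, hc, Lp.coeFn_neg c] with x a b d e
      rw [e, Pi.neg_apply, d] at a
      rw [d] at b
      exact abs_le.2 ⟨a, b⟩
    · intro h
      constructor
      · filter_upwards [h, hc, Lp.coeFn_neg c] with x a d e
        rw [e, Pi.neg_apply, d]
        exact (abs_le.1 a).1
      · filter_upwards [h, hc] with x a d
        rw [d]
        exact (abs_le.1 a).2
  have hKcl : IsClosed K := isClosed_Icc
  have : CompleteSpace K := hKcl.completeSpace_coe
  have : Nonempty K := ⟨⟨0, (hKmem 0).2 (by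
    filter_upwards [Lp.coeFn_zero ℝ 1 μ] with x hx
    rw [hx]; simp)⟩⟩
  have hcont n := aux_cont (hf n) K (fun φ h => (hKmem φ).1 h)
  have hpt : ∀ φ : K, Tendsto (fun n => ∫ x, f n x * (φ : Lp ℝ 1 μ) x ∂μ) atTop (𝓝 0) := by
    intro φ
    have hm : Measurable ((φ : Lp ℝ 1 μ) : X → ℝ) := (Lp.stronglyMeasurable _).measurable
    refine (hw (fun x => max (-1) (min 1 ((φ : Lp ℝ 1 μ) x))) (by fun_prop)
      ⟨1, fun x => by grind⟩).congr ?_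
    intro n
    apply integral_congr_ae
    filter_upwards [(hKmem _).1 φ.2] with x hx
    have : max (-1) (min 1 ((φ : Lp ℝ 1 μ) x)) = (φ : Lp ℝ 1 μ) x := by grind
    simp only [this]
  rw [Metric.tendsto_atTop]
  intro ε hε
  let F : ℕ → Set K := fun N => {φ | ∀ n ≥ N, |∫ x, f n x * (φ : Lp ℝ 1 μ) x ∂μ| ≤ ε / 4}
  have hFcl : ∀ N, IsClosed (F N) := by
    intro N
    have : F N = ⋂ n, ⋂ (_ : n ≥ N), {φ : K | |∫ x, f n x * (φ : Lp ℝ 1 μ) x ∂μ| ≤ ε / 4} := by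
      ext φ; simp [F]
    rw [this]
    exact isClosed_iInter fun n => isClosed_iInter fun _ =>
      isClosed_le (hcont n).abs continuous_const
  have hFU : ⋃ N, F N = Set.univ := by
    rw [Set.eq_univ_iff_forall]
    intro φ
    obtain ⟨N, hN⟩ := (Metric.tendsto_atTop.1 (hpt φ)) (ε / 4) (by positivity)
    refine Set.mem_iUnion.2 ⟨N, fun n hn => ?_⟩
    have := hN n hn
    rw [Real.dist_eq, sub_zero] at this
    exact this.le
  obtain ⟨N, φ0, hφ0⟩ := nonempty_interior_of_iUnion_of_closed hFcl hFU
  rw [mem_interior_iff_mem_nhds, Metric.mem_nhds_iff] at hφ0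
  obtain ⟨δ, hδ, hball⟩ := hφ0
  have key : ∀ ψ : X → ℝ, AEStronglyMeasurable ψ μ → (∀ᵐ x ∂μ, |ψ x| ≤ 1) →
      (∫ x, |ψ x - (φ0 : Lp ℝ 1 μ) x| ∂μ < δ) → ∀ n ≥ N, |∫ x, f n x * ψ x ∂μ| ≤ ε / 4 := by
    intro ψ hψm hψb hψd n hn
    have hψL : MemLp ψ 1 μ := MemLp.of_bound hψm 1 (by simpa [Real.norm_eq_abs] using hψb)
    have hco := hψL.coeFn_toLp
    have hmem : hψL.toLp ψ ∈ K := (hKmem _).2 (by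
      filter_upwards [hco, hψb] with x a b
      rwa [a])
    have hd : (⟨hψL.toLp ψ, hmem⟩ : K) ∈ Metric.ball φ0 δ := by
      rw [Metric.mem_ball, Subtype.dist_eq, dist_eq_norm, L1.norm_eq_integral_norm]
      refine lt_of_eq_of_lt (integral_congr_ae ?_) hψd
      filter_upwards [hco, Lp.coeFn_sub (hψL.toLp ψ) (φ0 : Lp ℝ 1 μ)] with x a b
      rw [b, Pi.sub_apply, a, Real.norm_eq_abs]
    have h := hball hd n hn
    refine le_of_eq_of_le ?_ h
    congr 1
    apply integral_congr_ae
    filter_upwards [hco] with x a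
    simp only [a]
  have hgi : Tendsto (fun n => ∫ x, |g n x| ∂μ) atTop (𝓝 0) := by
    have := tendsto_integral_of_dominated_convergence (μ := μ) (F := fun n x => |g n x|)
      (f := fun _ => (0 : ℝ)) (fun _ => (1 : ℝ)) (fun n => (hgm n).norm)
      (integrable_const _) (fun n => by simpa using hgb n)
      (by filter_upwards [hg] with x hx; simpa using hx.abs)
    simpa using this
  obtain ⟨N', hN'⟩ := eventually_atTop.1 (hgi.eventually (gt_mem_nhds hδ))
  refine ⟨max N N', fun n hn => ?_⟩
  have hnN : n ≥ N := le_trans (le_max_left _ _) hn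
  have hlt := hN' n (le_trans (le_max_right _ _) hn)
  have hφm : AEStronglyMeasurable ((φ0 : Lp ℝ 1 μ) : X → ℝ) μ := Lp.aestronglyMeasurable _
  have hφb := (hKmem _).1 φ0.2
  set ψ : X → ℝ := fun x => max (-1) (min 1 ((φ0 : Lp ℝ 1 μ) x + g n x)) with hψ
  have hψm : AEStronglyMeasurable ψ μ := by
    have h1 := (hφm.add (hgm n)).aemeasurable
    exact (aemeasurable_const.max (aemeasurable_const.min h1)).aestronglyMeasurable
  have hall : ∀ᵐ x ∂μ, |ψ x| ≤ 1 ∧ |ψ x - g n x| ≤ 1 ∧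
      |ψ x - (φ0 : Lp ℝ 1 μ) x| ≤ |g n x| ∧ |ψ x - g n x - (φ0 : Lp ℝ 1 μ) x| ≤ |g n x| := by
    filter_upwards [hφb, hgb n] with x a b
    exact aux_clamp _ _ a b
  have hgint : Integrable (fun x => |g n x|) μ :=
    (Integrable.of_bound (hgm n) 1 (by simpa [Real.norm_eq_abs] using hgb n)).abs
  have k1 := key ψ hψm (hall.mono fun x h => h.1) (lt_of_le_of_lt
    (integral_mono_of_nonneg (Eventually.of_forall fun x => abs_nonneg _) hgint
      (hall.mono fun x h => h.2.2.1)) hlt) n hnN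
  have k2 := key (fun x => ψ x - g n x) (hψm.sub (hgm n)) (hall.mono fun x h => h.2.1)
    (lt_of_le_of_lt
    (integral_mono_of_nonneg (Eventually.of_forall fun x => abs_nonneg _) hgint
      (hall.mono fun x h => h.2.2.2)) hlt) n hnN
  have e : ∫ x, f n x * g n x ∂μ =
      ∫ x, f n x * ψ x ∂μ - ∫ x, f n x * (ψ x - g n x) ∂μ := by
    rw [← integral_sub (aux_integrable_mul (hf n) hψm (hall.mono fun x h => h.1))
      (aux_integrable_mul (φ := fun x => ψ x - g n x) (hf n) (hψm.sub (hgm n)) (hall.mono fun x h => h.2.1))]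
    congr 1; ext x; ring
  rw [Real.dist_eq, sub_zero, e]
  have := abs_sub (∫ x, f n x * ψ x ∂μ) (∫ x, f n x * (ψ x - g n x) ∂μ)
  grind



/-- Let `(X, μ)` be a finite measure space, `{b₁ n}` integrable functions
converging weakly in `L¹(μ)` to `b₁lim` (i.e. against every bounded measurable test function),
and `{b₂ n}` measurable functions uniformly bounded a.e. by `C > 0` converging a.e. to `b₂lim`.
Then `∫ b₁ n * b₂ n dμ → ∫ b₁lim * b₂lim dμ`. -/
theorem stmt0 {X : Type*} [MeasurableSpace X] (μ : Measure X) [IsFiniteMeasure μ]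
    (b₁ : ℕ → X → ℝ) (b₁lim : X → ℝ) (b₂ : ℕ → X → ℝ) (b₂lim : X → ℝ) (C : ℝ)
    (hC : 0 < C)
    (hb₁int : ∀ n, Integrable (b₁ n) μ) (hb₁limint : Integrable b₁lim μ)
    (hweak : ∀ φ : X → ℝ, Measurable φ → (∃ M : ℝ, ∀ x, |φ x| ≤ M) →
      Tendsto (fun n => ∫ x, b₁ n x * φ x ∂μ) atTop (𝓝 (∫ x, b₁lim x * φ x ∂μ)))
    (hb₂meas : ∀ n, Measurable (b₂ n))
    (hb₂bdd : ∀ n, ∀ᵐ x ∂μ, |b₂ n x| ≤ C)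
    (hb₂conv : ∀ᵐ x ∂μ, Tendsto (fun n => b₂ n x) atTop (𝓝 (b₂lim x))) :
    Tendsto (fun n => ∫ x, b₁ n x * b₂ n x ∂μ) atTop (𝓝 (∫ x, b₁lim x * b₂lim x ∂μ)) := by
  have hlm : AEStronglyMeasurable b₂lim μ :=
    aestronglyMeasurable_of_tendsto_ae atTop
      (fun n => (hb₂meas n).aestronglyMeasurable) hb₂conv
  have hlb : ∀ᵐ x ∂μ, |b₂lim x| ≤ C := by
    filter_upwards [hb₂conv, ae_all_iff.2 hb₂bdd] with x h1 h2
    exact le_of_tendsto h1.abs (Eventually.of_forall h2)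
  have t1 := aux_main μ (fun n x => b₁ n x - b₁lim x)
    (fun n x => (b₂ n x - b₂lim x) / (2 * C)) (fun n => (hb₁int n).sub hb₁limint)
    (by
      intro φ hφ hM
      obtain ⟨M, hM'⟩ := hM
      have h := (hweak φ hφ ⟨M, hM'⟩).sub_const (∫ x, b₁lim x * φ x ∂μ)
      rw [sub_self] at h
      refine h.congr fun n => ?_
      rw [← integral_sub
        (aux_integrable_mul (hb₁int n) hφ.aestronglyMeasurable (Eventually.of_forall hM'))
        (aux_integrable_mul hb₁limint hφ.aestronglyMeasurable (Eventually.of_forall hM'))]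
      congr 1; ext x; ring)
    (fun n => by
      have := (((hb₂meas n).aestronglyMeasurable (μ := μ)).sub hlm).mul_const (2 * C)⁻¹
      simpa [div_eq_mul_inv] using this)
    (fun n => by
      filter_upwards [hb₂bdd n, hlb] with x h1 h2
      rw [abs_div, abs_of_pos (show 0 < 2 * C by positivity), div_le_one (by positivity)]
      have := abs_sub (b₂ n x) (b₂lim x)
      linarith)
    (by
      filter_upwards [hb₂conv] with x h
      have := (h.sub_const (b₂lim x)).div_const (2 * C)
      simpa using this)
  have t1' := t1.const_mul (2 * C)
  have t2 : Tendsto (fun n => ∫ x, b₁ n x * b₂lim x ∂μ) atTop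
      (𝓝 (∫ x, b₁lim x * b₂lim x ∂μ)) := by
    have hmm : Measurable (hlm.mk b₂lim) := hlm.stronglyMeasurable_mk.measurable
    have hae : ∀ᵐ x ∂μ, max (-C) (min C (hlm.mk b₂lim x)) = b₂lim x := by
      filter_upwards [hlm.ae_eq_mk, hlb] with x h1 h2
      rw [← h1]; grind
    have h := hweak (fun x => max (-C) (min C (hlm.mk b₂lim x))) (by fun_prop)
      ⟨C, fun x => by grind⟩
    have hcong : ∀ f : X → ℝ, ∫ x, f x * max (-C) (min C (hlm.mk b₂lim x)) ∂μ =
        ∫ x, f x * b₂lim x ∂μ := fun f =>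
      integral_congr_ae (hae.mono fun x hx => by simp only [hx])
    simpa only [hcong] using h
  have t3 : Tendsto (fun n => ∫ x, b₁lim x * b₂ n x ∂μ) atTop
      (𝓝 (∫ x, b₁lim x * b₂lim x ∂μ)) := by
    apply tendsto_integral_of_dominated_convergence (fun x => |b₁lim x| * C)
    · exact fun n => hb₁limint.1.mul (hb₂meas n).aestronglyMeasurable
    · exact hb₁limint.abs.mul_const C
    · intro n
      filter_upwards [hb₂bdd n] with x hx
      rw [norm_mul, Real.norm_eq_abs, Real.norm_eq_abs]
      gcongr
    · filter_upwards [hb₂conv] with x hx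
      exact hx.const_mul _
  have hsum := (t1'.add (t2.add t3)).sub_const (∫ x, b₁lim x * b₂lim x ∂μ)
  have hlim : 2 * C * 0 + (∫ x, b₁lim x * b₂lim x ∂μ + ∫ x, b₁lim x * b₂lim x ∂μ)
      - ∫ x, b₁lim x * b₂lim x ∂μ = ∫ x, b₁lim x * b₂lim x ∂μ := by ring
  rw [hlim] at hsum
  refine hsum.congr fun n => ?_
  have i1 := aux_integrable_mul (hb₁int n) (hb₂meas n).aestronglyMeasurable (hb₂bdd n)
  have i2 := aux_integrable_mul (hb₁int n) hlm hlb
  have i3 := aux_integrable_mul hb₁limint (hb₂meas n).aestronglyMeasurable (hb₂bdd n)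
  have i4 := aux_integrable_mul hb₁limint hlm hlb
  have e1 : 2 * C * ∫ x, (b₁ n x - b₁lim x) * ((b₂ n x - b₂lim x) / (2 * C)) ∂μ =
      ∫ x, ((b₁ n x * b₂ n x - b₁ n x * b₂lim x) - (b₁lim x * b₂ n x - b₁lim x * b₂lim x)) ∂μ := by
    rw [← integral_const_mul]
    congr 1; ext x; field_simp
  have i12 : Integrable (fun x => b₁ n x * b₂ n x - b₁ n x * b₂lim x) μ := i1.sub i2
  have i34 : Integrable (fun x => b₁lim x * b₂ n x - b₁lim x * b₂lim x) μ := i3.sub i4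
  rw [e1, integral_sub i12 i34, integral_sub i1 i2, integral_sub i3 i4]
  ring
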